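/- Let f be a strictly convex standard self-concordant function on ℝⁿ, x a point with Newton decrement λ(x) < 1, and let σ_1 ≥ … ≥ σ_n > 0 be the eigenvalues of ∇²f(x). Let Q be the truncated approximation of ∇²f(x) with parameter N, d̂ := −Q⁻¹ ∇f(x), and x⁺ := x + d̂ (unit step). Then λ(x⁺) ≤ [(1 − σ_n/σ_{N+1}) + λ(x)] / (1 − λ(x))² · λ(x). -/

import Mathlib

open Matrix

/-- Bernstein–Szegő inequality for binary cubic forms on the unit circle. -/
lemma abs_polar_binary_cubic_le {a b c d M : ℝ}
    (h : ∀ C S : ℝ, C ^ 2 + S ^ 2 = 1 →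
      |a * C ^ 3 + 3 * b * C ^ 2 * S + 3 * c * C * S ^ 2 + d * S ^ 3| ≤ M)
    {α β : ℝ} (hαβ : α ^ 2 + β ^ 2 = 1) : |α * a + β * b| ≤ M := by
  obtain ⟨C, S, hCS, hα, hβ⟩ : ∃ C S : ℝ, C ^ 2 + S ^ 2 = 1 ∧
      α = 4 * C ^ 3 - 3 * C ∧ β = 3 * S - 4 * S ^ 3 := by
    have hz : ‖(⟨α, β⟩ : ℂ)‖ = 1 := by
      rw [Complex.norm_eq_sqrt_sq_add_sq]; simp [hαβ]
    have hz0 : (⟨α, β⟩ : ℂ) ≠ 0 := by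
      intro h0; rw [h0] at hz; simp at hz
    refine ⟨Real.cos (Complex.arg ⟨α, β⟩ / 3), Real.sin (Complex.arg ⟨α, β⟩ / 3),
      Real.cos_sq_add_sin_sq _, ?_, ?_⟩
    · rw [← Real.cos_three_mul, mul_div_cancel₀ _ (by norm_num), Complex.cos_arg hz0, hz, div_one]
    · rw [← Real.sin_three_mul, mul_div_cancel₀ _ (by norm_num), Complex.sin_arg, hz, div_one]
  obtain ⟨k, hk⟩ : ∃ k : ℝ, k ^ 2 = 3 := ⟨√3, Real.sq_sqrt (by norm_num)⟩
  set P : ℝ → ℝ → ℝ := fun C S =>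
    a * C ^ 3 + 3 * b * C ^ 2 * S + 3 * c * C * S ^ 2 + d * S ^ 3 with hP
  set C₁ := -C / 2 - k / 2 * S with hC₁
  set S₁ := -S / 2 + k / 2 * C with hS₁
  set C₂ := -C / 2 + k / 2 * S with hC₂
  set S₂ := -S / 2 - k / 2 * C with hS₂
  have h₀ := abs_le.mp (h C S hCS)
  have h₁ := abs_le.mp (h C₁ S₁ (by rw [hC₁, hS₁]; linear_combination (C^2+S^2)/4 * hk + hCS))
  have h₂ := abs_le.mp (h C₂ S₂ (by rw [hC₂, hS₂]; linear_combination (C^2+S^2)/4 * hk + hCS))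
  change -M ≤ P C S ∧ P C S ≤ M at h₀
  change -M ≤ P C₁ S₁ ∧ P C₁ S₁ ≤ M at h₁
  change -M ≤ P C₂ S₂ ∧ P C₂ S₂ ≤ M at h₂
  set w₀ := (3 * C ^ 2 - S ^ 2) ^ 2 / 9 with hw₀
  set w₁ := 4 * S ^ 2 * (S + k * C) ^ 2 / 9 with hw₁
  set w₂ := 4 * S ^ 2 * (S - k * C) ^ 2 / 9 with hw₂
  have hsum : w₀ + w₁ + w₂ = 1 := by
    rw [hw₀, hw₁, hw₂]
    linear_combination 8 * S ^ 2 * C ^ 2 / 9 * hk + (C ^ 2 + S ^ 2 + 1) * hCS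
  have hα' : α = (C ^ 3 - 3 * C * S ^ 2) * (C ^ 2 + S ^ 2) ^ 2 := by
    rw [hα, hCS]; linear_combination (3 * C) * hCS
  have hβ' : β = (3 * C ^ 2 * S - S ^ 3) * (C ^ 2 + S ^ 2) ^ 2 := by
    rw [hβ, hCS]; linear_combination (-3 * S) * hCS
  have hk4 : k ^ 4 = 9 := by linear_combination (k ^ 2 + 3) * hk
  have hid : α * a + β * b = w₀ * P C S + w₁ * P C₁ S₁ + w₂ * P C₂ S₂ := by
    simp only [hα', hβ', hw₀, hw₁, hw₂, hC₁, hC₂, hS₁, hS₂, hP]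
    ring_nf
    simp only [hk, hk4]
    ring
  have p₀ : 0 ≤ w₀ := by positivity
  have p₁ : 0 ≤ w₁ := by positivity
  have p₂ : 0 ≤ w₂ := by positivity
  clear_value w₀ w₁ w₂ P C₁ S₁ C₂ S₂
  have hM : M = w₀ * M + w₁ * M + w₂ * M := by rw [← add_mul, ← add_mul, hsum, one_mul]
  rw [hid, abs_le]
  constructor
  · linarith [mul_le_mul_of_nonneg_left h₀.1 p₀, mul_le_mul_of_nonneg_left h₁.1 p₁,
      mul_le_mul_of_nonneg_left h₂.1 p₂]
  · linarith [mul_le_mul_of_nonneg_left h₀.2 p₀, mul_le_mul_of_nonneg_left h₁.2 p₁,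
      mul_le_mul_of_nonneg_left h₂.2 p₂]

section Trilinear

variable {E : Type*} [NormedAddCommGroup E] [NormedSpace ℝ E]

lemma abs_trilinear_le_of_unit {B : E →L[ℝ] E →L[ℝ] ℝ} {T : E →L[ℝ] E →L[ℝ] E →L[ℝ] ℝ}
    (hB : ∀ u v, B u v = B v u) (hBpos : ∀ u, u ≠ 0 → 0 < B u u)
    (hT₁ : ∀ u v w, T u v w = T v u w) (hT₂ : ∀ u v w, T u v w = T u w v) {M : ℝ}
    (hTM : ∀ w, B w w = 1 → |T w w w| ≤ M) {u v : E} (hu : B u u = 1) (hv : B v v = 1) :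
    |T u v v| ≤ M := by
  have hres : B (u - B u v • v) (u - B u v • v) = 1 - B u v ^ 2 := by
    simp [hu, hv, hB v u]; ring
  by_cases h0 : u - B u v • v = 0
  · have hα : B u v ^ 2 = 1 := by rw [h0] at hres; simp at hres; linarith
    have huv : u = B u v • v := sub_eq_zero.mp h0
    have : T u v v = B u v * T v v v := by
      conv_lhs => rw [huv]
      simp
    have habs : |B u v| = 1 :=
      (sq_eq_sq₀ (abs_nonneg _) zero_le_one).mp (by rw [sq_abs, hα, one_pow])
    rw [this, abs_mul, habs, one_mul]
    exact hTM v hv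
  · have hpos : 0 < 1 - B u v ^ 2 := hres ▸ hBpos _ h0
    obtain ⟨β, hβ, hβ2⟩ : ∃ β : ℝ, 0 < β ∧ β ^ 2 = 1 - B u v ^ 2 :=
      ⟨_, Real.sqrt_pos.mpr hpos, Real.sq_sqrt hpos.le⟩
    set α := B u v with hα
    obtain ⟨e, he⟩ : ∃ e, e = β⁻¹ • (u - α • v) := ⟨_, rfl⟩
    have hue : u = α • v + β • e := by rw [he, smul_inv_smul₀ hβ.ne']; abel
    have hee : B e e = 1 := by
      rw [he, map_smul, map_smul]
      simp only [_root_.smul_apply, hres, smul_eq_mul, ← hβ2]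
      field_simp
    have hev : B e v = 0 := by
      rw [he]; simp [hv, ← hα]
    have hTu : T u v v = α * T v v v + β * T e v v := by
      conv_lhs => rw [hue]
      simp
    rw [hTu]
    refine abs_polar_binary_cubic_le (c := T v e e) (d := T e e e) (fun C S hCS => ?_)
      (by rw [hβ2]; ring)
    have hunit : B (C • v + S • e) (C • v + S • e) = 1 := by
      simp [hv, hee, hev, hB v e]; linarith
    have := hTM _ hunit
    convert this using 2
    have e1 : T v e v = T e v v := hT₁ _ _ _
    have e2 : T v v e = T e v v := by rw [hT₂, e1]
    have e3 : T e v e = T v e e := hT₁ _ _ _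
    have e4 : T e e v = T v e e := by rw [hT₂, e3]
    simp [e1, e2, e3, e4]; ring

/-- A symmetric trilinear form bounded on the diagonal by an inner product is bounded off the
diagonal with the same constant. -/
lemma abs_trilinear_le {B : E →L[ℝ] E →L[ℝ] ℝ} {T : E →L[ℝ] E →L[ℝ] E →L[ℝ] ℝ}
    (hB : ∀ u v, B u v = B v u) (hBpos : ∀ u, u ≠ 0 → 0 < B u u)
    (hT₁ : ∀ u v w, T u v w = T v u w) (hT₂ : ∀ u v w, T u v w = T u w v) {M : ℝ}
    (hTM : ∀ w, B w w = 1 → |T w w w| ≤ M) (u v : E) :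
    |T u v v| ≤ M * √(B u u) * B v v := by
  rcases eq_or_ne u 0 with rfl | hu
  · simp
  rcases eq_or_ne v 0 with rfl | hv
  · simp
  have hu' := Real.sqrt_pos.mpr (hBpos u hu)
  have hv' := Real.sqrt_pos.mpr (hBpos v hv)
  have hu2 := Real.sq_sqrt (hBpos u hu).le
  have hv2 := Real.sq_sqrt (hBpos v hv).le
  set p := √(B u u)
  set q := √(B v v)
  have key := abs_trilinear_le_of_unit hB hBpos hT₁ hT₂ hTM (u := p⁻¹ • u) (v := q⁻¹ • v)
    (by simp [← hu2]; field_simp) (by simp [← hv2]; field_simp)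
  have hval : T u v v = p * q ^ 2 * T (p⁻¹ • u) (q⁻¹ • v) (q⁻¹ • v) := by
    simp; field_simp
  rw [hval, abs_mul, abs_of_pos (by positivity), ← hv2]
  nlinarith [mul_le_mul_of_nonneg_left key (by positivity : 0 ≤ p * q ^ 2)]

end Trilinear

lemma le_of_forall_hasDerivAt_nonneg {φ φ' : ℝ → ℝ}
    (hφ : ∀ t ∈ Set.Icc (0 : ℝ) 1, HasDerivAt φ (φ' t) t)
    (hφ' : ∀ t ∈ Set.Icc (0 : ℝ) 1, 0 ≤ φ' t) {t : ℝ} (ht : t ∈ Set.Icc (0 : ℝ) 1) :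
    φ 0 ≤ φ t := by
  have hmono : MonotoneOn φ (Set.Icc 0 1) := by
    refine monotoneOn_of_hasDerivWithinAt_nonneg (f' := φ') (convex_Icc 0 1)
      (fun s hs => (hφ s hs).continuousAt.continuousWithinAt)
      (fun s hs => (hφ s (interior_subset hs)).hasDerivWithinAt)
      (fun s hs => hφ' s (interior_subset hs))
  exact hmono (by simp) ht ht.1

lemma hasDerivAt_one_sub_mul (r s : ℝ) : HasDerivAt (fun s : ℝ => 1 - s * r) (-r) s := by
  simpa using ((hasDerivAt_id s).mul_const r).const_sub 1

lemma hasDerivAt_one_sub_mul_sq (r s : ℝ) :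
    HasDerivAt (fun s : ℝ => (1 - s * r) ^ 2) (2 * (1 - s * r) * -r) s := by
  simpa using (hasDerivAt_one_sub_mul r s).fun_pow 2

section SelfConcordant

variable {E : Type*} [NormedAddCommGroup E] [NormedSpace ℝ E]

lemma hasDerivAt_add_smul (x u : E) (t : ℝ) : HasDerivAt (fun s : ℝ => x + s • u) u t := by
  simpa using ((hasDerivAt_id t).smul_const u).const_add x

/-- `H` is a field of inner products on `E` with derivative `T`, and `T` satisfies the bound
defining standard self-concordance. -/
structure IsSelfConcordantHessian (H : E → E →L[ℝ] E →L[ℝ] ℝ)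
    (T : E → E →L[ℝ] E →L[ℝ] E →L[ℝ] ℝ) : Prop where
  hasFDerivAt : ∀ y, HasFDerivAt H (T y) y
  symm : ∀ y u v, H y u v = H y v u
  pos : ∀ y u, u ≠ 0 → 0 < H y u u
  symm_left : ∀ y u v w, T y u v w = T y v u w
  symm_right : ∀ y u v w, T y u v w = T y u w v
  bound : ∀ y w, |T y w w w| ≤ 2 * √(H y w w) ^ 3

namespace IsSelfConcordantHessian

variable {H : E → E →L[ℝ] E →L[ℝ] ℝ} {T : E → E →L[ℝ] E →L[ℝ] E →L[ℝ] ℝ}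
  (h : IsSelfConcordantHessian H T)
include h

lemma nonneg (y u : E) : 0 ≤ H y u u := by
  rcases eq_or_ne u 0 with rfl | hu
  · simp
  · exact (h.pos y u hu).le

lemma abs_le (y u v : E) : |T y u v v| ≤ 2 * √(H y u u) * H y v v := by
  refine abs_trilinear_le (h.symm y) (h.pos y) (h.symm_left y) (h.symm_right y) (fun w hw => ?_) u v
  simpa [hw] using h.bound y w

lemma hasDerivAt_line (x d u v : E) (t : ℝ) :
    HasDerivAt (fun s : ℝ => H (x + s • d) u v) (T (x + t • d) d u v) t := by
  have h1 : HasDerivAt (fun s : ℝ => H (x + s • d)) (T (x + t • d) d) t :=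
    HasFDerivAt.comp_hasDerivAt (l := H) (f := fun s : ℝ => x + s • d) t (h.hasFDerivAt _)
      (hasDerivAt_add_smul x d t)
  have h2 := h1.clm_apply (hasDerivAt_const t u)
  have h3 := h2.clm_apply (hasDerivAt_const t v)
  simpa using h3

variable {x d : E} (hr : √(H x d d) < 1) {t : ℝ} (ht : t ∈ Set.Icc (0 : ℝ) 1)
include hr ht

omit h in
lemma one_sub_pos : 0 < 1 - t * √(H x d d) := by
  nlinarith [ht.1, ht.2, Real.sqrt_nonneg (H x d d)]

lemma sqrt_line_le : √(H (x + t • d) d d) ≤ √(H x d d) / (1 - t * √(H x d d)) := by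
  rcases eq_or_ne d 0 with rfl | hd
  · simp
  have hpos : ∀ s : ℝ, 0 < √(H (x + s • d) d d) := fun s => Real.sqrt_pos.mpr (h.pos _ d hd)
  have key := le_of_forall_hasDerivAt_nonneg
    (φ := fun s => (√(H (x + s • d) d d))⁻¹ + s)
    (φ' := fun s => -(T (x + s • d) d d d / (2 * √(H (x + s • d) d d)))
      / √(H (x + s • d) d d) ^ 2 + 1)
    (fun s _ => (((h.hasDerivAt_line x d d d s).sqrt (h.pos _ d hd).ne').inv
      (hpos s).ne').add (hasDerivAt_id s))
    (fun s _ => by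
      have hb := (_root_.abs_le.mp (h.bound (x + s • d) d)).2
      have hp := hpos s
      rw [neg_div, div_div, neg_add_eq_sub, sub_nonneg, div_le_one (by positivity)]
      linarith) ht
  simp only [zero_smul, add_zero] at key
  have h0 : 0 < √(H x d d) := Real.sqrt_pos.mpr (h.pos _ d hd)
  rw [le_div_iff₀ (one_sub_pos hr ht)]
  have hq := hpos t
  set q := √(H (x + t • d) d d)
  set r := √(H x d d)
  have := mul_le_mul_of_nonneg_left key (mul_pos hq h0).le
  have e1 : q * r * r⁻¹ = q := by field_simp
  have e2 : q * r * (q⁻¹ + t) = r + q * r * t := by field_simp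
  rw [e1, e2] at this
  linarith

lemma abs_line_le (v : E) : |T (x + t • d) d v v| ≤
    2 * (√(H x d d) / (1 - t * √(H x d d))) * H (x + t • d) v v :=
  (h.abs_le _ d v).trans (by gcongr; exacts [h.nonneg _ _, h.sqrt_line_le hr ht])

lemma line_ge (v : E) : (1 - t * √(H x d d)) ^ 2 * H x v v ≤ H (x + t • d) v v := by
  set r := √(H x d d) with hrdef
  have key := le_of_forall_hasDerivAt_nonneg
    (φ := fun s => H (x + s • d) v v / (1 - s * r) ^ 2)
    (φ' := fun s => (T (x + s • d) d v v * (1 - s * r) ^ 2 -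
      H (x + s • d) v v * (2 * (1 - s * r) * -r)) / ((1 - s * r) ^ 2) ^ 2)
    (fun s hs => by
      have hp := one_sub_pos hr hs
      refine (h.hasDerivAt_line x d v v s).div ?_ (by positivity)
      exact hasDerivAt_one_sub_mul_sq r s)
    (fun s hs => by
      have hp := one_sub_pos hr hs
      rw [← hrdef] at hp
      have hb := (_root_.abs_le.mp (h.abs_line_le hr hs v)).1
      rw [← hrdef] at hb
      apply div_nonneg _ (by positivity)
      have := mul_le_mul_of_nonneg_right hb (by positivity : 0 ≤ (1 - s * r) ^ 2)
      have e : -(2 * (r / (1 - s * r)) * H (x + s • d) v v) * (1 - s * r) ^ 2 =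
        H (x + s • d) v v * (2 * (1 - s * r) * -r) := by field_simp
      rw [e] at this
      linarith) ht
  have hp := one_sub_pos hr ht
  rw [← hrdef] at hp
  simp only [zero_smul, add_zero, zero_mul, sub_zero, one_pow, div_one] at key
  rw [le_div_iff₀ (by positivity)] at key
  linarith

lemma line_le (v : E) : H (x + t • d) v v ≤ H x v v / (1 - t * √(H x d d)) ^ 2 := by
  set r := √(H x d d) with hrdef
  have key := le_of_forall_hasDerivAt_nonneg
    (φ := fun s => -(H (x + s • d) v v * (1 - s * r) ^ 2))
    (φ' := fun s => -(T (x + s • d) d v v * (1 - s * r) ^ 2 +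
      H (x + s • d) v v * (2 * (1 - s * r) * -r)))
    (fun s hs => by
      refine ((h.hasDerivAt_line x d v v s).mul ?_).neg
      exact hasDerivAt_one_sub_mul_sq r s)
    (fun s hs => by
      have hp := one_sub_pos hr hs
      rw [← hrdef] at hp
      have hb := (_root_.abs_le.mp (h.abs_line_le hr hs v)).2
      rw [← hrdef] at hb
      have := mul_le_mul_of_nonneg_right hb (by positivity : 0 ≤ (1 - s * r) ^ 2)
      have e : 2 * (r / (1 - s * r)) * H (x + s • d) v v * (1 - s * r) ^ 2 =
        -(H (x + s • d) v v * (2 * (1 - s * r) * -r)) := by field_simp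
      rw [e] at this
      linarith) ht
  have hp := one_sub_pos hr ht
  rw [← hrdef] at hp
  simp only [zero_smul, add_zero, zero_mul, sub_zero, one_pow, mul_one] at key
  rw [le_div_iff₀ (by positivity)]
  linarith

lemma apply_line_sub_le (w : E) : H (x + t • d) d w - H x d w ≤
    √(H x d d) * √(H x w w) * (1 / (1 - t * √(H x d d)) ^ 2 - 1) := by
  set r := √(H x d d) with hrdef
  have key := le_of_forall_hasDerivAt_nonneg
    (φ := fun s => r * √(H x w w) * ((1 - s * r) ^ 2)⁻¹ - H (x + s • d) d w)
    (φ' := fun s => r * √(H x w w) * (-(2 * (1 - s * r) * -r) / ((1 - s * r) ^ 2) ^ 2) -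
      T (x + s • d) d d w)
    (fun s hs => by
      have hp := one_sub_pos hr hs
      refine (HasDerivAt.const_mul _ (HasDerivAt.inv ?_ (by positivity))).sub
        (h.hasDerivAt_line x d d w s)
      exact hasDerivAt_one_sub_mul_sq r s)
    (fun s hs => by
      have hp := one_sub_pos hr hs
      rw [← hrdef] at hp
      have hT : T (x + s • d) d d w = T (x + s • d) w d d := by
        rw [h.symm_right, h.symm_left]
      have hw : √(H (x + s • d) w w) ≤ √(H x w w) / (1 - s * r) := by
        rw [Real.sqrt_le_left (by positivity), div_pow, Real.sq_sqrt (h.nonneg _ _)]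
        exact h.line_le hr hs w
      have hd : H (x + s • d) d d ≤ r ^ 2 / (1 - s * r) ^ 2 := by
        rw [hrdef, Real.sq_sqrt (h.nonneg _ _)]
        exact h.line_le hr hs d
      have hb := (le_abs_self _).trans (h.abs_le (x + s • d) w d)
      have hc : 2 * √(H (x + s • d) w w) * H (x + s • d) d d ≤
          2 * (√(H x w w) / (1 - s * r)) * (r ^ 2 / (1 - s * r) ^ 2) := by
        gcongr
        exact h.nonneg _ _
      have e : r * √(H x w w) * (-(2 * (1 - s * r) * -r) / ((1 - s * r) ^ 2) ^ 2) =
          2 * (√(H x w w) / (1 - s * r)) * (r ^ 2 / (1 - s * r) ^ 2) := by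
        field_simp
      rw [hT, e]
      linarith) ht
  simp only [zero_smul, add_zero, zero_mul, sub_zero, one_pow, inv_one, mul_one] at key
  rw [one_div]
  linarith

omit ht in
/-- Second-order Taylor bound for the gradient `g` of a self-concordant function. -/
lemma gradient_sub_le {g : E → E →L[ℝ] ℝ} (hg : ∀ y, HasFDerivAt g (H y) y) (w : E) :
    g (x + d) w - g x w - H x d w ≤
      √(H x w w) * (√(H x d d) ^ 2 / (1 - √(H x d d))) := by
  have hline : ∀ s : ℝ, HasDerivAt (fun s : ℝ => g (x + s • d) w) (H (x + s • d) d w) s := by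
    intro s
    have h1 : HasDerivAt (fun s : ℝ => g (x + s • d)) (H (x + s • d) d) s :=
      HasFDerivAt.comp_hasDerivAt (f := fun s : ℝ => x + s • d) s (hg _)
        (hasDerivAt_add_smul x d s)
    simpa using h1.clm_apply (hasDerivAt_const s w)
  set r := √(H x d d) with hrdef
  have key := le_of_forall_hasDerivAt_nonneg (t := 1)
    (φ := fun s => √(H x w w) * ((1 - s * r)⁻¹ - s * r) - (g (x + s • d) w - s * H x d w))
    (φ' := fun s => √(H x w w) * (-(-r) / (1 - s * r) ^ 2 - r) -
      (H (x + s • d) d w - H x d w))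
    (fun s hs => by
      have hp := one_sub_pos hr hs
      refine (HasDerivAt.const_mul _ ((HasDerivAt.inv ?_ (by exact hp.ne')).sub ?_)).sub
        ((hline s).sub ?_)
      · exact hasDerivAt_one_sub_mul r s
      · simpa using (hasDerivAt_id s).mul_const r
      · simpa using (hasDerivAt_id s).mul_const (H x d w))
    (fun s hs => by
      have hb := h.apply_line_sub_le hr hs w
      rw [← hrdef] at hb
      have e : √(H x w w) * (-(-r) / (1 - s * r) ^ 2 - r) =
        r * √(H x w w) * (1 / (1 - s * r) ^ 2 - 1) := by ring
      rw [e]; linarith) (by simp)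
  simp only [zero_smul, add_zero, zero_mul, sub_zero, one_smul, one_mul, inv_one, mul_one] at key
  have hp : 0 < 1 - r := by linarith
  have e : √(H x w w) * (r ^ 2 / (1 - r)) = √(H x w w) * ((1 - r)⁻¹ - r) - √(H x w w) := by
    field_simp; ring
  rw [e]; linarith

omit ht in
/-- Estimate for the dual norm of the gradient after the step `d`, in terms of the residual of
the Newton equation at `x`; `z` represents the gradient at `x + d`. -/
lemma sqrt_step_le {g : E → E →L[ℝ] ℝ} (hg : ∀ y, HasFDerivAt g (H y) y) {z : E}
    (hz : g (x + d) z = H (x + d) z z) {ρ : ℝ} (hρ : 0 ≤ ρ)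
    (hres : g x z + H x d z ≤ ρ * √(H x z z)) :
    √(H (x + d) z z) ≤ (ρ + √(H x d d) ^ 2 / (1 - √(H x d d))) / (1 - √(H x d d)) := by
  have hp : 0 < 1 - √(H x d d) := by linarith
  have h1 := h.gradient_sub_le hr hg z
  have h2 := h.line_ge hr (t := 1) (by simp) z
  rw [one_smul, one_mul] at h2
  have h3 : (1 - √(H x d d)) * √(H x z z) ≤ √(H (x + d) z z) := by
    apply Real.le_sqrt_of_sq_le
    rwa [mul_pow, Real.sq_sqrt (h.nonneg _ _)]
  have h4 := Real.sq_sqrt (h.nonneg (x + d) z)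
  set r := √(H x d d)
  set L := √(H (x + d) z z)
  set K := ρ + r ^ 2 / (1 - r)
  have hK : 0 ≤ K := by positivity
  have h5 : L ^ 2 ≤ K * √(H x z z) := by
    rw [h4, ← hz]; simp only [K]; linarith
  rw [le_div_iff₀ hp]
  rcases (Real.sqrt_nonneg (H (x + d) z z)).eq_or_lt with h0 | h0
  · rw [show L = 0 from h0.symm, zero_mul]; exact hK
  · have h6 : L * (L * (1 - r)) ≤ L * K := by
      nlinarith [mul_le_mul_of_nonneg_left h3 hK]
    exact le_of_mul_le_mul_left h6 h0

end IsSelfConcordantHessian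

end SelfConcordant

section Line

variable {E : Type*} [NormedAddCommGroup E] [NormedSpace ℝ E] {f : E → ℝ}

lemma ContDiff.hasFDerivAt_fderiv_fderiv (hf : ContDiff ℝ 3 f) (y : E) :
    HasFDerivAt (fderiv ℝ f) (fderiv ℝ (fderiv ℝ f) y) y :=
  ((hf.fderiv_right (m := 2) (by norm_num)).differentiable (by norm_num) y).hasFDerivAt

lemma ContDiff.hasFDerivAt_fderiv_fderiv_fderiv (hf : ContDiff ℝ 3 f) (y : E) :
    HasFDerivAt (fderiv ℝ (fderiv ℝ f)) (fderiv ℝ (fderiv ℝ (fderiv ℝ f)) y) y :=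
  (((hf.fderiv_right (m := 2) (by norm_num)).fderiv_right (m := 1) (by norm_num)).differentiable
    (by norm_num) y).hasFDerivAt

lemma ContDiff.deriv_line (hf : ContDiff ℝ 3 f) (x u : E) :
    deriv (fun s : ℝ => f (x + s • u)) = fun t => fderiv ℝ f (x + t • u) u := by
  funext t
  exact (HasFDerivAt.comp_hasDerivAt (l := f) (f := fun s : ℝ => x + s • u) t
    ((hf.differentiable (by norm_num) _).hasFDerivAt) (hasDerivAt_add_smul x u t)).deriv

lemma ContDiff.iteratedDeriv_two_line (hf : ContDiff ℝ 3 f) (x u : E) :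
    iteratedDeriv 2 (fun s : ℝ => f (x + s • u)) =
      fun t => fderiv ℝ (fderiv ℝ f) (x + t • u) u u := by
  rw [iteratedDeriv_succ, iteratedDeriv_one, hf.deriv_line]
  funext t
  have h := HasFDerivAt.comp_hasDerivAt (l := fderiv ℝ f) (f := fun s : ℝ => x + s • u) t
    (hf.hasFDerivAt_fderiv_fderiv _) (hasDerivAt_add_smul x u t)
  simpa using (h.clm_apply (hasDerivAt_const t u)).deriv

lemma ContDiff.iteratedDeriv_three_line (hf : ContDiff ℝ 3 f) (x u : E) :
    iteratedDeriv 3 (fun s : ℝ => f (x + s • u)) =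
      fun t => fderiv ℝ (fderiv ℝ (fderiv ℝ f)) (x + t • u) u u u := by
  rw [iteratedDeriv_succ, hf.iteratedDeriv_two_line]
  funext t
  have h := HasFDerivAt.comp_hasDerivAt (l := fderiv ℝ (fderiv ℝ f))
    (f := fun s : ℝ => x + s • u) t
    (hf.hasFDerivAt_fderiv_fderiv_fderiv _) (hasDerivAt_add_smul x u t)
  simpa using ((h.clm_apply (hasDerivAt_const t u)).clm_apply (hasDerivAt_const t u)).deriv

lemma ContDiff.isSelfConcordantHessian (hf : ContDiff ℝ 3 f)
    (hpos : ∀ y u, u ≠ 0 → 0 < fderiv ℝ (fderiv ℝ f) y u u)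
    (hsc : ∀ x u : E, ∀ t : ℝ, |iteratedDeriv 3 (fun s : ℝ => f (x + s • u)) t|
        ≤ 2 * iteratedDeriv 2 (fun s : ℝ => f (x + s • u)) t ^ ((3 : ℝ) / 2)) :
    IsSelfConcordantHessian (fderiv ℝ (fderiv ℝ f)) (fderiv ℝ (fderiv ℝ (fderiv ℝ f))) := by
  have hsymm : ∀ y u v, fderiv ℝ (fderiv ℝ f) y u v = fderiv ℝ (fderiv ℝ f) y v u := by
    intro y u v
    exact (hf.contDiffAt.isSymmSndFDerivAt (by simp; norm_num)).eq u v
  refine ⟨hf.hasFDerivAt_fderiv_fderiv_fderiv, hsymm, hpos, ?_, ?_, ?_⟩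
  · intro y u v w
    have := ((hf.fderiv_right (m := 2) (by norm_num)).contDiffAt (x := y)).isSymmSndFDerivAt
      (by simp)
    rw [this.eq u v]
  · intro y u v w
    have hd : ∀ a b : E, HasFDerivAt (fun p => fderiv ℝ (fderiv ℝ f) p a b)
        (((fderiv ℝ (fderiv ℝ (fderiv ℝ f)) y).flip a).flip b) y := by
      intro a b
      have h := ((hf.hasFDerivAt_fderiv_fderiv_fderiv y).clm_apply
        (hasFDerivAt_const a y)).clm_apply (hasFDerivAt_const b y)
      refine h.congr_fderiv ?_
      ext c
      simp
    have h1 := hd v w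
    simp_rw [fun p => hsymm p v w] at h1
    simpa using DFunLike.congr_fun (h1.unique (hd w v)) u
  · intro y w
    have h := hsc y w 0
    rw [hf.iteratedDeriv_two_line, hf.iteratedDeriv_three_line] at h
    simp only [zero_smul, add_zero] at h
    have hnn : 0 ≤ fderiv ℝ (fderiv ℝ f) y w w := by
      rcases eq_or_ne w 0 with rfl | hw
      · simp
      · exact (hpos y w hw).le
    rwa [show ((3 : ℝ) / 2) = (1 / 2) * (3 : ℕ) by norm_num, Real.rpow_mul hnn,
      ← Real.sqrt_eq_rpow, Real.rpow_natCast] at h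

end Line

section Spectral

variable {n : ℕ} {u : Fin n → Fin n → ℝ}
  (hu : ∀ i j : Fin n, u i ⬝ᵥ u j = if i = j then (1 : ℝ) else 0)
include hu

lemma dotProduct_eq_sum_of_orthonormal (a b : Fin n → ℝ) :
    a ⬝ᵥ b = ∑ i, (a ⬝ᵥ u i) * (b ⬝ᵥ u i) := by
  have h1 : Matrix.of u * (Matrix.of u)ᵀ = 1 := by
    ext i j
    rw [Matrix.mul_apply', Matrix.one_apply]
    exact hu i j
  have h2 := mul_eq_one_comm.mp h1
  have h3 : (Matrix.of u *ᵥ a) ⬝ᵥ (Matrix.of u *ᵥ b) = a ⬝ᵥ b := by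
    rw [Matrix.dotProduct_mulVec, Matrix.vecMul_mulVec, h2, Matrix.vecMul_one]
  rw [← h3]
  refine Finset.sum_congr rfl fun i _ => ?_
  rw [dotProduct_comm a, dotProduct_comm b]
  rfl

omit hu in
lemma mulVec_dotProduct_eigenvector {A : Matrix (Fin n) (Fin n) ℝ} (hA : A.IsSymm) {s : ℝ}
    {w : Fin n → ℝ} (hw : A *ᵥ w = s • w) (v : Fin n → ℝ) :
    (A *ᵥ v) ⬝ᵥ w = s * (v ⬝ᵥ w) := by
  rw [dotProduct_comm, Matrix.dotProduct_mulVec, ← Matrix.mulVec_transpose, hA.eq, hw,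
    smul_dotProduct, dotProduct_comm, smul_eq_mul]

lemma isUnit_of_eigenbasis {A : Matrix (Fin n) (Fin n) ℝ} (hA : A.IsSymm) {s : Fin n → ℝ}
    (hs : ∀ i, 0 < s i) (hAu : ∀ i, A *ᵥ u i = s i • u i) : IsUnit A := by
  rw [← Matrix.mulVec_injective_iff_isUnit]
  intro v w hvw
  have h0 : (v - w) ⬝ᵥ (v - w) = 0 := by
    rw [dotProduct_eq_sum_of_orthonormal hu]
    refine Finset.sum_eq_zero fun i _ => ?_
    have h1 := mulVec_dotProduct_eigenvector hA (hAu i) (v - w)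
    have h2 : A *ᵥ (v - w) = 0 := by rw [Matrix.mulVec_sub]; exact sub_eq_zero.mpr hvw
    rw [h2, zero_dotProduct] at h1
    rw [(mul_eq_zero.mp h1.symm).resolve_left (hs i).ne', mul_zero]
  exact sub_eq_zero.mp (dotProduct_self_eq_zero.mp h0)

lemma inv_mulVec_dotProduct_eigenvector {A : Matrix (Fin n) (Fin n) ℝ} (hA : A.IsSymm)
    {s : Fin n → ℝ} (hs : ∀ i, 0 < s i) (hAu : ∀ i, A *ᵥ u i = s i • u i) (v : Fin n → ℝ)
    (i : Fin n) : (A⁻¹ *ᵥ v) ⬝ᵥ u i = (v ⬝ᵥ u i) / s i := by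
  have h := mulVec_dotProduct_eigenvector hA (hAu i) (A⁻¹ *ᵥ v)
  have hdet := (Matrix.isUnit_iff_isUnit_det A).mp (isUnit_of_eigenbasis hu hA hs hAu)
  rw [Matrix.mulVec_mulVec, Matrix.mul_nonsing_inv _ hdet, Matrix.one_mulVec] at h
  rw [h, mul_div_cancel_left₀ _ (hs i).ne']

variable {A Q : Matrix (Fin n) (Fin n) ℝ} (hA : A.IsSymm) (hQ : Q.IsSymm) {σ q : Fin n → ℝ}
  (hσ : ∀ i, 0 < σ i) (hσq : ∀ i, σ i ≤ q i) (hAu : ∀ i, A *ᵥ u i = σ i • u i)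
  (hQu : ∀ i, Q *ᵥ u i = q i • u i)
include hA hQ hσ hσq hAu hQu

lemma step_quadForm_le (g : Fin n → ℝ) :
    -(Q⁻¹ *ᵥ g) ⬝ᵥ (A *ᵥ -(Q⁻¹ *ᵥ g)) ≤ g ⬝ᵥ (A⁻¹ *ᵥ g) := by
  have hq : ∀ i, 0 < q i := fun i => (hσ i).trans_le (hσq i)
  rw [dotProduct_eq_sum_of_orthonormal hu, dotProduct_eq_sum_of_orthonormal hu g]
  refine Finset.sum_le_sum fun i _ => ?_
  rw [mulVec_dotProduct_eigenvector hA (hAu i), neg_dotProduct,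
    inv_mulVec_dotProduct_eigenvector hu hQ hq hQu, inv_mulVec_dotProduct_eigenvector hu hA hσ hAu]
  have h1 := hσ i
  have h2 := hq i
  have h3 := hσq i
  set c := g ⬝ᵥ u i
  have e : c * (c / σ i) - -(c / q i) * (σ i * -(c / q i)) =
      c ^ 2 * ((q i - σ i) * (q i + σ i)) / (σ i * q i ^ 2) := by
    field_simp; ring
  have : 0 ≤ c ^ 2 * ((q i - σ i) * (q i + σ i)) / (σ i * q i ^ 2) := by
    have := sub_nonneg.mpr h3
    positivity
  linarith

lemma step_residual_le {κ : ℝ} (hκ₀ : 0 ≤ κ) (hκ : ∀ i, 1 - σ i / q i ≤ κ) (g z : Fin n → ℝ) :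
    g ⬝ᵥ z + -(Q⁻¹ *ᵥ g) ⬝ᵥ (A *ᵥ z) ≤ κ * √(g ⬝ᵥ (A⁻¹ *ᵥ g)) * √(z ⬝ᵥ (A *ᵥ z)) := by
  have hq : ∀ i, 0 < q i := fun i => (hσ i).trans_le (hσq i)
  have e1 : g ⬝ᵥ (A⁻¹ *ᵥ g) = ∑ i, (|g ⬝ᵥ u i| / √(σ i)) ^ 2 := by
    rw [dotProduct_eq_sum_of_orthonormal hu]
    refine Finset.sum_congr rfl fun i _ => ?_
    rw [inv_mulVec_dotProduct_eigenvector hu hA hσ hAu, div_pow, sq_abs, Real.sq_sqrt (hσ i).le]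
    ring
  have e2 : z ⬝ᵥ (A *ᵥ z) = ∑ i, (√(σ i) * |z ⬝ᵥ u i|) ^ 2 := by
    rw [dotProduct_eq_sum_of_orthonormal hu]
    refine Finset.sum_congr rfl fun i _ => ?_
    rw [mulVec_dotProduct_eigenvector hA (hAu i), mul_pow, sq_abs, Real.sq_sqrt (hσ i).le]
    ring
  have hcs := Real.sum_mul_le_sqrt_mul_sqrt Finset.univ (fun i => |g ⬝ᵥ u i| / √(σ i))
    (fun i => √(σ i) * |z ⬝ᵥ u i|)
  rw [← e1, ← e2] at hcs
  rw [mul_assoc]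
  refine le_trans ?_ (mul_le_mul_of_nonneg_left hcs hκ₀)
  rw [dotProduct_eq_sum_of_orthonormal hu, dotProduct_eq_sum_of_orthonormal hu (-(Q⁻¹ *ᵥ g)),
    ← Finset.sum_add_distrib, Finset.mul_sum]
  refine Finset.sum_le_sum fun i _ => ?_
  rw [mulVec_dotProduct_eigenvector hA (hAu i), neg_dotProduct,
    inv_mulVec_dotProduct_eigenvector hu hQ hq hQu]
  have hs : √(σ i) ≠ 0 := (Real.sqrt_pos.mpr (hσ i)).ne'
  have hq0 := (hq i).ne'
  have e3 : |g ⬝ᵥ u i| / √(σ i) * (√(σ i) * |z ⬝ᵥ u i|) = |(g ⬝ᵥ u i) * (z ⬝ᵥ u i)| := by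
    rw [abs_mul]; field_simp
  have e4 : (g ⬝ᵥ u i) * (z ⬝ᵥ u i) + -((g ⬝ᵥ u i) / q i) * (σ i * (z ⬝ᵥ u i)) =
      (1 - σ i / q i) * ((g ⬝ᵥ u i) * (z ⬝ᵥ u i)) := by
    ring
  rw [e3, e4]
  have h1 : 0 ≤ 1 - σ i / q i := sub_nonneg.mpr ((div_le_one (hq i)).mpr (hσq i))
  exact (mul_le_mul_of_nonneg_left (le_abs_self _) h1).trans
    (mul_le_mul_of_nonneg_right (hκ i) (abs_nonneg _))

end Spectral

/-- Let `f` be strictly convex standard self-concordant, `x`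
a point with Newton decrement `λ(x) < 1`, `σ_1 ≥ … ≥ σ_n > 0` the eigenvalues
of `∇²f(x)`, `Q` the truncated approximation of `∇²f(x)` with parameter `N`,
`d̂ = −Q⁻¹ ∇f(x)` and `x⁺ := x + d̂` (unit step).  Then
`λ(x⁺) ≤ [(1 − σ_n/σ_{N+1}) + λ(x)] / (1 − λ(x))² · λ(x)`. -/
theorem stmt13 {n N : ℕ} (hN : 1 ≤ N) (hNn : N < n)
    (f : (Fin n → ℝ) → ℝ) (grad : (Fin n → ℝ) → Fin n → ℝ)
    (hess : (Fin n → ℝ) → Matrix (Fin n) (Fin n) ℝ)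
    (hf : ContDiff ℝ 3 f)
    (hconv : StrictConvexOn ℝ Set.univ f)
    (hgrad : ∀ x u : Fin n → ℝ, deriv (fun t : ℝ => f (x + t • u)) 0 = grad x ⬝ᵥ u)
    (hhessq : ∀ x u : Fin n → ℝ,
      iteratedDeriv 2 (fun t : ℝ => f (x + t • u)) 0 = u ⬝ᵥ (hess x *ᵥ u))
    (hhsymm : ∀ x, (hess x).IsSymm)
    (hhpd : ∀ x, (hess x).PosDef)
    (hsc : ∀ x u : Fin n → ℝ, ∀ t : ℝ,
      |iteratedDeriv 3 (fun s : ℝ => f (x + s • u)) t|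
        ≤ 2 * iteratedDeriv 2 (fun s : ℝ => f (x + s • u)) t ^ ((3 : ℝ) / 2))
    (hclosed : ∀ c : ℝ, IsClosed {x | f x ≤ c})
    (hbdd : BddBelow (Set.range f))
    (x : Fin n → ℝ)
    (σ : Fin n → ℝ) (u : Fin n → Fin n → ℝ)
    (hσpos : ∀ i, 0 < σ i)
    (hσmono : ∀ i j : Fin n, i ≤ j → σ j ≤ σ i)
    (hortho : ∀ i j : Fin n, u i ⬝ᵥ u j = if i = j then (1 : ℝ) else 0)
    (heig : ∀ i, hess x *ᵥ u i = σ i • u i)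
    (Q : Matrix (Fin n) (Fin n) ℝ) (hQsymm : Q.IsSymm)
    (hQeig : ∀ i : Fin n, Q *ᵥ u i = (if (i : ℕ) < N then σ i else σ ⟨N, hNn⟩) • u i)
    (lam : ℝ) (hlam : lam = Real.sqrt (grad x ⬝ᵥ ((hess x)⁻¹ *ᵥ grad x)))
    (hlam1 : lam < 1) :
    Real.sqrt (grad (x + -(Q⁻¹ *ᵥ grad x)) ⬝ᵥ
        ((hess (x + -(Q⁻¹ *ᵥ grad x)))⁻¹ *ᵥ grad (x + -(Q⁻¹ *ᵥ grad x))))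
      ≤ ((1 - σ ⟨n - 1, by omega⟩ / σ ⟨N, hNn⟩) + lam) / (1 - lam) ^ 2 * lam := by
  have hD1 : ∀ y v, fderiv ℝ f y v = grad y ⬝ᵥ v := fun y v => by
    have h := hgrad y v
    rw [hf.deriv_line] at h
    simpa using h
  have hquad : ∀ y v, fderiv ℝ (fderiv ℝ f) y v v = v ⬝ᵥ (hess y *ᵥ v) := fun y v => by
    have h := hhessq y v
    rw [hf.iteratedDeriv_two_line] at h
    simpa using h
  have hH : IsSelfConcordantHessian (fderiv ℝ (fderiv ℝ f))
      (fderiv ℝ (fderiv ℝ (fderiv ℝ f))) := by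
    refine hf.isSelfConcordantHessian (fun y v hv => ?_) hsc
    rw [hquad]
    simpa using (hhpd y).dotProduct_mulVec_pos hv
  have hsymm : ∀ y (v w : Fin n → ℝ), w ⬝ᵥ (hess y *ᵥ v) = v ⬝ᵥ (hess y *ᵥ w) := fun y v w => by
    rw [dotProduct_comm, Matrix.dotProduct_mulVec v, ← Matrix.mulVec_transpose, (hhsymm y).eq]
  have hD2 : ∀ y v w, fderiv ℝ (fderiv ℝ f) y v w = v ⬝ᵥ (hess y *ᵥ w) := fun y v w => by
    have h := hquad y (v + w)
    simp only [map_add, _root_.add_apply, Matrix.mulVec_add, dotProduct_add, add_dotProduct, hquad,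
      hH.symm y w v, hsymm y v w] at h
    linarith
  set q : Fin n → ℝ := fun i => if (i : ℕ) < N then σ i else σ ⟨N, hNn⟩ with hq
  have hσq : ∀ i, σ i ≤ q i := fun i => by
    by_cases hi : (i : ℕ) < N
    · simp [hq, hi]
    · simpa [hq, hi] using hσmono ⟨N, hNn⟩ i (Fin.mk_le_of_le_val (not_lt.mp hi))
  set last : Fin n := ⟨n - 1, by omega⟩ with hlast
  have hle_last : ∀ i : Fin n, i ≤ last := fun i => Fin.le_def.mpr (by simp [hlast]; omega)
  have hσN := hσpos ⟨N, hNn⟩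
  set κ := 1 - σ last / σ ⟨N, hNn⟩ with hκdef
  have hκ₀ : 0 ≤ κ := sub_nonneg.mpr ((div_le_one hσN).mpr (hσmono _ _ (hle_last _)))
  have hκ : ∀ i, 1 - σ i / q i ≤ κ := fun i => by
    by_cases hi : (i : ℕ) < N
    · simpa [hq, hi, (hσpos i).ne'] using hκ₀
    · simp only [hq, hi, if_false, hκdef]
      gcongr
      exact hσmono _ _ (hle_last i)
  set d := -(Q⁻¹ *ᵥ grad x) with hd
  have hr : √(fderiv ℝ (fderiv ℝ f) x d d) ≤ lam := by
    rw [hquad, hlam]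
    exact Real.sqrt_le_sqrt
      (step_quadForm_le hortho (hhsymm x) hQsymm hσpos hσq heig hQeig (grad x))
  have hlam0 : 0 ≤ lam := hlam ▸ Real.sqrt_nonneg _
  set z := (hess (x + d))⁻¹ *ᵥ grad (x + d) with hz
  have hHz : hess (x + d) *ᵥ z = grad (x + d) := by
    rw [hz, Matrix.mulVec_mulVec, Matrix.mul_nonsing_inv _
      ((Matrix.isUnit_iff_isUnit_det _).mp (hhpd _).isUnit), Matrix.one_mulVec]
  have hgz : grad (x + d) ⬝ᵥ z = fderiv ℝ (fderiv ℝ f) (x + d) z z := by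
    rw [hquad, hHz, dotProduct_comm]
  have hmain := hH.sqrt_step_le (hr.trans_lt hlam1) hf.hasFDerivAt_fderiv_fderiv
    (z := z) (ρ := κ * lam) ((hD1 _ _).trans hgz) (by positivity) (by
      rw [hD1, hD2, hquad, hlam]
      exact step_residual_le hortho (hhsymm x) hQsymm hσpos hσq heig hQeig hκ₀ hκ (grad x) z)
  rw [hgz]
  refine hmain.trans ?_
  have hr0 := Real.sqrt_nonneg (fderiv ℝ (fderiv ℝ f) x d d)
  set r := √(fderiv ℝ (fderiv ℝ f) x d d)
  have hp : 0 < 1 - lam := by linarith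
  calc (κ * lam + r ^ 2 / (1 - r)) / (1 - r)
      ≤ (κ * lam + lam ^ 2 / (1 - lam)) / (1 - lam) := by gcongr
    _ = (κ * (1 - lam) + lam) / (1 - lam) ^ 2 * lam := by field_simp
    _ ≤ (κ + lam) / (1 - lam) ^ 2 * lam := by gcongr; nlinarith
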